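/- arXiv:2106.03760 — 4 statements merged into one kernel-verified Lean document; each statement's English description precedes it below -/
import Mathlib

section
/- (Proposition 2, second part) For every positive integers m and k, every real γ > 0, every α ∈ ℝ^k, and every matrix Z ∈ ℝ^{k×m} with rows z^{(1)},…,z^{(k)}, the DSelect-k gate output q̃(α,Z) = ∑_{i=1}^k σ(α)_i · r(S(z^{(i)})) ∈ ℝ^{2^m} belongs to the probability simplex: all its entries are nonnegative and they sum to 1. -/
/-!
The softmax weights are nonnegative and sum to `1`, so the gate is a convex combination of the
vectors `r(S(z^(t)))`, and it suffices that each of these lies in the simplex. Entries are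
nonnegative because the smooth step takes values in `[0, 1]`: on `[-γ/2, γ/2]` one has, with
`u = t / γ`, `S = 2 (u + 1/2)² (1 - u)` and `1 - S = 2 (1/2 - u)² (1 + u)`. The entries of `r(z)`
sum to `1` for every `z`, since the sum over all bit patterns is the expansion of
`∏ j, (z j + (1 - z j))`; this is `sum_selector`, by induction on the number of bits.
-/

/-- The single expert selector: for `i : Fin (2^m)` (0-indexed, corresponding to the
paper's 1-indexed expert `i+1`), `r(z)_i = ∏_{j ∈ B(i)} z_j · ∏_{j ∉ B(i)} (1 - z_j)`,
where `B(i)` is the set of (0-indexed) nonzero bits of `i`. -/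
def selector (m : ℕ) (z : Fin m → ℝ) (i : Fin (2 ^ m)) : ℝ :=
  ∏ j : Fin m, if Nat.testBit i.val j.val then z j else 1 - z j

/-- The smooth-step function with scaling parameter `γ`. -/
noncomputable def smoothStep (γ : ℝ) (t : ℝ) : ℝ :=
  if t ≤ -γ / 2 then 0
  else if γ / 2 ≤ t then 1
  else -(2 / γ ^ 3) * t ^ 3 + 3 / (2 * γ) * t + 1 / 2

/-- The softmax function `σ(α)_i = exp(α_i) / ∑_j exp(α_j)`. -/
noncomputable def softmax {k : ℕ} (α : Fin k → ℝ) (i : Fin k) : ℝ :=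
  Real.exp (α i) / ∑ j : Fin k, Real.exp (α j)

/-- The DSelect-k gate `q̃(α, Z) = ∑_i σ(α)_i · r(S(z^(i)))`. -/
noncomputable def dselect (m k : ℕ) (γ : ℝ) (α : Fin k → ℝ) (Z : Fin k → Fin m → ℝ)
    (i : Fin (2 ^ m)) : ℝ :=
  ∑ t : Fin k, softmax α t * selector m (fun j => smoothStep γ (Z t j)) i

lemma smoothStep_mem_Icc {γ : ℝ} (hγ : 0 < γ) (t : ℝ) :
    0 ≤ smoothStep γ t ∧ smoothStep γ t ≤ 1 := by
  unfold smoothStep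
  split_ifs with h1 h2
  · simp
  · simp
  · obtain ⟨u, rfl⟩ : ∃ u, t = γ * u := ⟨t / γ, by field_simp⟩
    have e : -(2 / γ ^ 3) * (γ * u) ^ 3 + 3 / (2 * γ) * (γ * u) + 1 / 2
        = -2 * u ^ 3 + 3 / 2 * u + 1 / 2 := by
      field_simp
    rw [e]
    have hu1 : -1 / 2 < u := by
      by_contra h
      exact h1 (by nlinarith)
    have hu2 : u < 1 / 2 := by
      by_contra h
      exact h2 (by nlinarith)
    constructor
    · have := mul_nonneg (sq_nonneg (u + 1 / 2)) (show 0 ≤ 1 - u by linarith)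
      nlinarith
    · have := mul_nonneg (sq_nonneg (1 / 2 - u)) (show 0 ≤ 1 + u by linarith)
      nlinarith

/-- The sum over all bit patterns, with indices in `ℕ` so that the range `2 ^ (m + 1)` can be split
according to the most significant bit. -/
lemma sum_range_prod_testBit (m : ℕ) (z : ℕ → ℝ) :
    ∑ i ∈ Finset.range (2 ^ m),
      ∏ j ∈ Finset.range m, (if Nat.testBit i j then z j else 1 - z j) = 1 := by
  induction m with
  | zero => simp
  | succ m ih =>
    rw [pow_succ, mul_two, Finset.sum_range_add]
    have low : ∀ i ∈ Finset.range (2 ^ m),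
        ∏ j ∈ Finset.range (m + 1), (if Nat.testBit i j then z j else 1 - z j)
          = (∏ j ∈ Finset.range m, (if Nat.testBit i j then z j else 1 - z j)) * (1 - z m) := by
      intro i hi
      rw [Finset.prod_range_succ, Nat.testBit_lt_two_pow (Finset.mem_range.1 hi)]
      simp
    have high : ∀ i ∈ Finset.range (2 ^ m),
        ∏ j ∈ Finset.range (m + 1), (if Nat.testBit (2 ^ m + i) j then z j else 1 - z j)
          = (∏ j ∈ Finset.range m, (if Nat.testBit i j then z j else 1 - z j)) * z m := by
      intro i hi
      rw [Finset.prod_range_succ, Nat.testBit_two_pow_add_eq,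
        Nat.testBit_lt_two_pow (Finset.mem_range.1 hi)]
      congr 1
      refine Finset.prod_congr rfl fun j hj => ?_
      rw [Nat.testBit_two_pow_add_gt (Finset.mem_range.1 hj)]
    rw [Finset.sum_congr rfl low, Finset.sum_congr rfl high, ← Finset.sum_mul, ← Finset.sum_mul, ih]
    ring

lemma sum_selector (m : ℕ) (z : Fin m → ℝ) : ∑ i, selector m z i = 1 := by
  -- `z` is extended by zero; the values outside `Fin m` are never used.
  have h := sum_range_prod_testBit m (fun j => if hj : j < m then z ⟨j, hj⟩ else 0)
  rw [← Fin.sum_univ_eq_sum_range (fun i => ∏ j ∈ Finset.range m, _) (2 ^ m)] at h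
  rw [← h]
  refine Finset.sum_congr rfl fun i _ => ?_
  rw [Finset.prod_range]
  simp [selector]

lemma selector_nonneg (m : ℕ) (z : Fin m → ℝ) (hz : ∀ j, 0 ≤ z j ∧ z j ≤ 1) (i : Fin (2 ^ m)) :
    0 ≤ selector m z i := by
  refine Finset.prod_nonneg fun j _ => ?_
  split_ifs
  · exact (hz j).1
  · exact sub_nonneg.2 (hz j).2

lemma softmax_nonneg {k : ℕ} (α : Fin k → ℝ) (i : Fin k) : 0 ≤ softmax α i := by
  unfold softmax
  positivity

lemma sum_softmax {k : ℕ} (hk : 0 < k) (α : Fin k → ℝ) : ∑ i, softmax α i = 1 := by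
  unfold softmax
  rw [← Finset.sum_div]
  have : Nonempty (Fin k) := ⟨⟨0, hk⟩⟩
  exact div_self (ne_of_gt (Finset.sum_pos (fun j _ => Real.exp_pos _) Finset.univ_nonempty))

/-- Proposition 2, second part: for `m, k ≥ 1`, `γ > 0`, any `α : ℝ^k`
and any matrix `Z : ℝ^(k×m)`, the DSelect-k gate output `q̃(α, Z)` belongs to the
probability simplex. -/
theorem dselect_mem_simplex (m k : ℕ) (hm : 0 < m) (hk : 0 < k) (γ : ℝ) (hγ : 0 < γ)
    (α : Fin k → ℝ) (Z : Fin k → Fin m → ℝ) :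
    (∀ i : Fin (2 ^ m), 0 ≤ dselect m k γ α Z i) ∧
    ∑ i : Fin (2 ^ m), dselect m k γ α Z i = 1 := by
  constructor
  · intro i
    exact Finset.sum_nonneg fun t _ => mul_nonneg (softmax_nonneg α t)
      (selector_nonneg m _ (fun j => smoothStep_mem_Icc hγ (Z t j)) i)
  · unfold dselect
    rw [Finset.sum_comm]
    simp_rw [← Finset.mul_sum, sum_selector, mul_one]
    exact sum_softmax hk α
end

section
/- (Reverse direction of Proposition 1) Let m and k be positive integers and set n = 2^m. For every vector w ∈ ℝ^n in the probability simplex with at most k nonzero entries (‖w‖₀ ≤ k), there exist α ∈ ℝ^k and binary vectors z^{(1)},…,z^{(k)} ∈ {0,1}^m such that q(α,Z) = ∑_{i=1}^k σ(α)_i · r(z^{(i)}) = w. -/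
/-- The combinatorial gate `q(α, Z) = ∑_{i=1}^k σ(α)_i · r(z^{(i)})`. -/
noncomputable def gate (m k : ℕ) (α : Fin k → ℝ) (Z : Fin k → Fin m → ℝ)
    (i : Fin (2 ^ m)) : ℝ :=
  ∑ t : Fin k, softmax α t * selector m (Z t) i

/-- `‖w‖₀`: the number of nonzero entries of `w`. -/
noncomputable def norm0 {n : ℕ} (w : Fin n → ℝ) : ℕ :=
  (Finset.univ.filter fun i => w i ≠ 0).card

/-- On the bits of an index `a`, the selector is the indicator of `a`. -/
lemma selector_bits (m : ℕ) (a i : Fin (2 ^ m)) :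
    selector m (fun j => if Nat.testBit a.val j.val then 1 else 0) i = if i = a then 1 else 0 := by
  unfold selector
  split_ifs with h
  · subst h
    apply Finset.prod_eq_one
    intro j _
    by_cases hb : Nat.testBit i.val j.val <;> simp [hb]
  -- Distinct indices below `2 ^ m` differ in one of the first `m` bits; that factor vanishes.
  · obtain ⟨j, hj⟩ : ∃ j : Fin m, Nat.testBit i.val j.val ≠ Nat.testBit a.val j.val := by
      by_contra! hall
      refine h (Fin.ext (Nat.eq_of_testBit_eq fun j => ?_))
      by_cases hjm : j < m
      · exact hall ⟨j, hjm⟩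
      · have hle : 2 ^ m ≤ 2 ^ j := Nat.pow_le_pow_right (by norm_num) (by omega)
        rw [Nat.testBit_lt_two_pow (i.isLt.trans_le hle),
          Nat.testBit_lt_two_pow (a.isLt.trans_le hle)]
    apply Finset.prod_eq_zero (Finset.mem_univ j)
    cases hi : Nat.testBit i.val j.val <;> cases ha : Nat.testBit a.val j.val <;> simp_all

lemma softmax_log {k : ℕ} (β : Fin k → ℝ) (hpos : ∀ t, 0 < β t) (hsum : ∑ t, β t = 1)
    (t : Fin k) : softmax (fun t => Real.log (β t)) t = β t := by
  simp [softmax, Real.exp_log (hpos _), hsum]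

/-- reverse direction of Proposition 1: every vector `w` in the
probability simplex of `ℝ^(2^m)` with at most `k` nonzero entries can be written as
`q(α, Z)` for some `α : ℝ^k` and binary codes `z^(1), …, z^(k) ∈ {0,1}^m`. -/
theorem gate_binary_realizes_sparse_simplex (m k : ℕ) (hm : 0 < m) (hk : 0 < k)
    (w : Fin (2 ^ m) → ℝ) (hw0 : ∀ i, 0 ≤ w i) (hw1 : ∑ i : Fin (2 ^ m), w i = 1)
    (hws : norm0 w ≤ k) :
    ∃ (α : Fin k → ℝ) (Z : Fin k → Fin m → ℝ),
      (∀ i j, Z i j = 0 ∨ Z i j = 1) ∧ gate m k α Z = w := by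
  classical
  set S : Finset (Fin (2 ^ m)) := Finset.univ.filter fun i => w i ≠ 0 with hS
  have hcard : S.card ≤ k := by
    unfold norm0 at hws
    convert hws
  have hne : Nonempty S := by
    by_contra hempty
    have hzero : ∀ i, w i = 0 := by
      intro i
      by_contra hi
      exact hempty ⟨i, by simp [hS, hi]⟩
    simp [hzero] at hw1
  obtain ⟨g⟩ : Nonempty (S ↪ Fin k) :=
    Function.Embedding.nonempty_of_card_le (by simpa using hcard)
  obtain ⟨f, hf⟩ : ∃ f : Fin k → S, Function.Surjective f :=
    ⟨Function.invFun g, Function.invFun_surjective g.injective⟩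
  let c : Fin (2 ^ m) → ℕ := fun i => (Finset.univ.filter fun t => i = (f t : Fin (2 ^ m))).card
  let β : Fin k → ℝ := fun t => w (f t) / c (f t)
  have hwpos : ∀ t, 0 < w (f t) := fun t =>
    lt_of_le_of_ne (hw0 _) (Ne.symm (Finset.mem_filter.mp (f t).2).2)
  have hcpos : ∀ t, 0 < c (f t) := fun t => Finset.card_pos.mpr ⟨t, by simp⟩
  have hpos : ∀ t, 0 < β t := fun t => div_pos (hwpos t) (by exact_mod_cast hcpos t)
  have hfib : ∀ i, ∑ t, (if i = (f t : Fin (2 ^ m)) then β t else 0) = w i := by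
    intro i
    have hconst : ∑ t, (if i = (f t : Fin (2 ^ m)) then β t else 0) = c i * (w i / c i) := by
      rw [← Finset.sum_filter, ← nsmul_eq_mul]
      apply Finset.sum_eq_card_nsmul
      intro t ht
      simp only [β, ← (Finset.mem_filter.mp ht).2]
    rw [hconst]
    by_cases hi : w i = 0
    · simp [hi]
    · obtain ⟨t, ht⟩ := hf ⟨i, by simp [hS, hi]⟩
      have hc := hcpos t
      rw [ht] at hc
      have hc' : (c i : ℝ) ≠ 0 := by exact_mod_cast hc.ne'
      exact mul_div_cancel₀ _ hc'
  have hsum : ∑ t, β t = 1 := by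
    rw [← hw1, ← Finset.sum_congr rfl fun i _ => hfib i, Finset.sum_comm]
    simp
  refine ⟨fun t => Real.log (β t),
    fun t j => if Nat.testBit (f t : Fin (2 ^ m)).val j.val then 1 else 0, ?_, ?_⟩
  · intro t j
    dsimp only
    split_ifs <;> simp
  · funext i
    unfold gate
    simp only [softmax_log β hpos hsum, selector_bits, mul_ite, mul_one, mul_zero]
    exact hfib i
end

section
/- (Sparsity of the smoothed gate on binary configurations) Let m, k be positive integers and γ > 0. If α ∈ ℝ^k and Z ∈ ℝ^{k×m} are such that S(Z_{ij}) ∈ {0,1} for every i ∈ {1,…,k} and j ∈ {1,…,m}, then the DSelect-k gate output q̃(α,Z) = ∑_{i=1}^k σ(α)_i · r(S(z^{(i)})) has at most k nonzero entries: ‖q̃(α,Z)‖₀ ≤ k. -/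
theorem testBit_iff_of_selector_ne_zero {m : ℕ} {z : Fin m → ℝ} (hz : ∀ j, z j = 0 ∨ z j = 1)
    {i : Fin (2 ^ m)} (hi : selector m z i ≠ 0) (j : Fin m) :
    Nat.testBit i.val j.val = true ↔ z j = 1 := by
  have hj := Finset.prod_ne_zero_iff.mp hi j (Finset.mem_univ j)
  rcases hz j with h | h <;> by_cases hb : Nat.testBit i.val j.val = true <;> simp_all

/-- At a binary point the selector is supported on at most one expert. -/
theorem eq_of_selector_ne_zero {m : ℕ} {z : Fin m → ℝ} (hz : ∀ j, z j = 0 ∨ z j = 1)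
    {a b : Fin (2 ^ m)} (ha : selector m z a ≠ 0) (hb : selector m z b ≠ 0) : a = b := by
  apply Fin.ext
  apply Nat.eq_of_testBit_eq
  intro j
  by_cases hj : j < m
  · exact Bool.eq_iff_iff.mpr ((testBit_iff_of_selector_ne_zero hz ha ⟨j, hj⟩).trans
      (testBit_iff_of_selector_ne_zero hz hb ⟨j, hj⟩).symm)
  · -- Both numbers are below `2 ^ m`, so their bits from position `m` on are all zero.
    have hle : 2 ^ m ≤ 2 ^ j := Nat.pow_le_pow_right (by norm_num) (not_lt.mp hj)
    rw [Nat.testBit_lt_two_pow (a.isLt.trans_le hle), Nat.testBit_lt_two_pow (b.isLt.trans_le hle)]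

/-- sparsity of the smoothed gate on binary configurations: if every
entry of `S(Z)` is binary, then the DSelect-k gate output `q̃(α, Z)` has at most `k`
nonzero entries. -/
theorem dselect_sparse_of_binary (m k : ℕ) (hm : 0 < m) (hk : 0 < k) (γ : ℝ)
    (hγ : 0 < γ) (α : Fin k → ℝ) (Z : Fin k → Fin m → ℝ)
    (hZ : ∀ i j, smoothStep γ (Z i j) = 0 ∨ smoothStep γ (Z i j) = 1) :
    norm0 (dselect m k γ α Z) ≤ k := by
  have key : ∀ i, dselect m k γ α Z i ≠ 0 →
      ∃ t, selector m (fun j => smoothStep γ (Z t j)) i ≠ 0 := by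
    intro i hi
    obtain ⟨t, -, ht⟩ := Finset.exists_ne_zero_of_sum_ne_zero hi
    exact ⟨t, right_ne_zero_of_mul ht⟩
  -- `⟨0, hk⟩` is a default value, so that the chosen summand is a total function of the expert.
  have key' : ∀ i, ∃ t : Fin k, dselect m k γ α Z i ≠ 0 →
      selector m (fun j => smoothStep γ (Z t j)) i ≠ 0 := by
    intro i
    by_cases hi : dselect m k γ α Z i ≠ 0
    · obtain ⟨t, ht⟩ := key i hi
      exact ⟨t, fun _ => ht⟩
    · exact ⟨⟨0, hk⟩, fun h => absurd h hi⟩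
  choose f hf using key'
  calc norm0 (dselect m k γ α Z) ≤ (Finset.univ : Finset (Fin k)).card := by
        refine Finset.card_le_card_of_injOn f (fun _ _ => Finset.mem_univ _) ?_
        intro a ha b hb hab
        have ha' := hf a (Finset.mem_filter.mp ha).2
        have hb' := hf b (Finset.mem_filter.mp hb).2
        rw [← hab] at hb'
        exact eq_of_selector_ne_zero (hZ (f a)) ha' hb'
    _ = k := Finset.card_fin k
end

section
/- (Continuous differentiability of the DSelect-k gate) For every positive integers m, k and every γ > 0, the map (α, Z) ↦ q̃(α,Z) = ∑_{i=1}^k σ(α)_i · r(S(z^{(i)})), viewed as a function from ℝ^k × ℝ^{k×m} to ℝ^{2^m}, is continuously differentiable (of class C¹). -/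
lemma hasDerivAt_posPart_sq (x : ℝ) :
    HasDerivAt (fun y : ℝ => (max y 0) ^ 2) (2 * max x 0) x := by
  rcases lt_trichotomy x 0 with hx | rfl | hx
  · rw [max_eq_right hx.le, mul_zero]
    refine (hasDerivAt_const x (0 : ℝ)).congr_of_eventuallyEq ?_
    filter_upwards [Iio_mem_nhds hx] with y hy
    simp [max_eq_right (Set.mem_Iio.1 hy).le]
  · -- At the origin, `0 ≤ y₊² ≤ y²`, so the difference quotient tends to `0`.
    rw [max_self, mul_zero, hasDerivAt_iff_isLittleO]
    have h : (fun y : ℝ => y ^ 2) =o[nhds 0] (fun y : ℝ => y) := by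
      simpa using Asymptotics.isLittleO_pow_pow (𝕜 := ℝ) (m := 1) (n := 2) (by norm_num)
    have hO : (fun y : ℝ => (max y 0) ^ 2) =O[nhds 0] (fun y : ℝ => y ^ 2) := by
      refine Asymptotics.IsBigO.of_bound 1 (Filter.Eventually.of_forall fun y => ?_)
      rcases le_total y 0 with hy | hy <;> simp [hy, sq_nonneg]
    simpa using hO.trans_isLittleO h
  · rw [max_eq_left hx.le]
    have h : HasDerivAt (fun y : ℝ => y ^ 2) (2 * x) x := by
      simpa using hasDerivAt_pow 2 x
    refine h.congr_of_eventuallyEq ?_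
    filter_upwards [Ioi_mem_nhds hx] with y hy
    simp [max_eq_left (Set.mem_Ioi.1 hy).le]

lemma contDiff_posPart_sq : ContDiff ℝ 1 (fun y : ℝ => (max y 0) ^ 2) := by
  rw [contDiff_one_iff_deriv]
  refine ⟨fun x => (hasDerivAt_posPart_sq x).differentiableAt, ?_⟩
  rw [show deriv (fun y : ℝ => (max y 0) ^ 2) = fun x => 2 * max x 0 from
    funext fun x => (hasDerivAt_posPart_sq x).deriv]
  fun_prop

/-- A case-free expression of the smooth-step through squared positive parts at its two knots. -/
lemma smoothStep_eq {γ : ℝ} (hγ : 0 < γ) (t : ℝ) :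
    smoothStep γ t =
      (3 - 2 * (t / γ + 1 / 2)) * (max (t / γ + 1 / 2) 0) ^ 2 +
        (3 + 2 * (t / γ - 1 / 2)) * (max (t / γ - 1 / 2) 0) ^ 2 := by
  obtain ⟨x, rfl⟩ : ∃ x, t = γ * x := ⟨t / γ, by field_simp⟩
  have hdiv : γ * x / γ = x := by field_simp
  have h1 : γ * x ≤ -γ / 2 ↔ x ≤ -1 / 2 := by
    constructor <;> intro h <;> nlinarith
  have h2 : γ / 2 ≤ γ * x ↔ 1 / 2 ≤ x := by
    constructor <;> intro h <;> nlinarith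
  simp only [smoothStep, h1, h2, hdiv]
  split_ifs with ha hb
  · rw [max_eq_right (by linarith), max_eq_right (by linarith)]
    ring
  · rw [max_eq_left (by linarith), max_eq_left (by linarith)]
    ring
  · push Not at ha hb
    rw [max_eq_left (by linarith), max_eq_right (by linarith)]
    field_simp
    ring

lemma contDiff_smoothStep {γ : ℝ} (hγ : 0 < γ) : ContDiff ℝ 1 (smoothStep γ) := by
  rw [show smoothStep γ = _ from funext (smoothStep_eq hγ)]
  have h1 : ContDiff ℝ 1 fun t : ℝ => t / γ + 1 / 2 := by fun_prop
  have h2 : ContDiff ℝ 1 fun t : ℝ => t / γ - 1 / 2 := by fun_prop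
  have h3 := contDiff_posPart_sq.comp h1
  have h4 := contDiff_posPart_sq.comp h2
  exact ((contDiff_const.sub (contDiff_const.mul h1)).mul h3).add
    ((contDiff_const.add (contDiff_const.mul h2)).mul h4)

lemma contDiff_softmax {k : ℕ} (hk : 0 < k) (i : Fin k) :
    ContDiff ℝ 1 (fun α : Fin k → ℝ => softmax α i) := by
  have : Nonempty (Fin k) := ⟨⟨0, hk⟩⟩
  unfold softmax
  refine ContDiff.div (by fun_prop) (by fun_prop) fun α => ?_
  exact (Finset.sum_pos (fun j _ => Real.exp_pos (α j)) Finset.univ_nonempty).ne'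

lemma contDiff_selector (m : ℕ) (i : Fin (2 ^ m)) :
    ContDiff ℝ 1 (fun z : Fin m → ℝ => selector m z i) := by
  unfold selector
  refine contDiff_prod fun j _ => ?_
  split_ifs <;> fun_prop

/-- continuous differentiability of the DSelect-k gate: for `m, k ≥ 1`
and `γ > 0`, the map `(α, Z) ↦ q̃(α, Z)`, from `ℝ^k × ℝ^(k×m)` to `ℝ^(2^m)`, is
continuously differentiable. -/
theorem dselect_contDiff (m k : ℕ) (hm : 0 < m) (hk : 0 < k) (γ : ℝ) (hγ : 0 < γ) :
    ContDiff ℝ 1 (fun p : (Fin k → ℝ) × (Fin k → Fin m → ℝ) =>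
      fun i : Fin (2 ^ m) => dselect m k γ p.1 p.2 i) := by
  refine contDiff_pi.2 fun i => ?_
  unfold dselect
  refine ContDiff.sum fun t _ => ?_
  refine ((contDiff_softmax hk t).comp contDiff_fst).mul ((contDiff_selector m i).comp ?_)
  refine contDiff_pi.2 fun j => (contDiff_smoothStep hγ).comp ?_
  fun_prop
end
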